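/- arXiv:2605.15679 — 5 statements merged into one kernel-verified Lean document; each statement's English description precedes it below -/
import Mathlib

section
/- Let n be a natural number, let A be a symmetric real n×n matrix, and let U, Ũ : ℝⁿ → ℝ be differentiable functions with ∇Ũ(q) = A·∇U(q) for every q ∈ ℝⁿ. If q : ℝ → ℝⁿ is a twice differentiable curve satisfying q''(t) + ∇U(q(t)) = 0 for all t, then the energy function t ↦ (1/2)⟨A·q'(t), q'(t)⟩ + Ũ(q(t)) is constant on ℝ. -/
open Matrix RealInnerProductSpace

/-- Action of an `n × n` matrix on `EuclideanSpace ℝ (Fin n)` by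
matrix–vector multiplication (`Matrix.mulVec`). -/
noncomputable def mulVecE {n : ℕ} (A : Matrix (Fin n) (Fin n) ℝ)
    (v : EuclideanSpace ℝ (Fin n)) : EuclideanSpace ℝ (Fin n) :=
  (WithLp.equiv 2 (Fin n → ℝ)).symm (A.mulVec (WithLp.equiv 2 (Fin n → ℝ) v))

lemma mulVecE_eq {n : ℕ} (A : Matrix (Fin n) (Fin n) ℝ) (v : EuclideanSpace ℝ (Fin n)) :
    mulVecE A v = Matrix.toEuclideanCLM (𝕜 := ℝ) A v := by
  ext i
  simp [mulVecE]

lemma mulVecE_symm {n : ℕ} (A : Matrix (Fin n) (Fin n) ℝ) (hA : Aᵀ = A)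
    (v w : EuclideanSpace ℝ (Fin n)) :
    inner ℝ (mulVecE A v) w = inner ℝ v (mulVecE A w) := by
  simp only [mulVecE, EuclideanSpace.inner_eq_star_dotProduct]
  simp only [WithLp.equiv_symm_apply, WithLp.equiv_apply, star_trivial]
  rw [Matrix.dotProduct_mulVec, ← Matrix.mulVec_transpose, hA, dotProduct_comm]

theorem stmt_1 (n : ℕ) (A : Matrix (Fin n) (Fin n) ℝ) (hA : Aᵀ = A)
    (U Ut : EuclideanSpace ℝ (Fin n) → ℝ)
    (hU : Differentiable ℝ U) (hUt : Differentiable ℝ Ut)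
    (hgrad : ∀ q, gradient Ut q = mulVecE A (gradient U q))
    (q : ℝ → EuclideanSpace ℝ (Fin n))
    (hq : Differentiable ℝ q) (hq' : Differentiable ℝ (deriv q))
    (hEL : ∀ t, deriv (deriv q) t + gradient U (q t) = 0) :
    ∀ t₁ t₂ : ℝ,
      (1 / 2 : ℝ) * ⟪mulVecE A (deriv q t₁), deriv q t₁⟫ + Ut (q t₁) =
      (1 / 2 : ℝ) * ⟪mulVecE A (deriv q t₂), deriv q t₂⟫ + Ut (q t₂) := by
  have key : ∀ t, HasDerivAt (fun t => (1 / 2 : ℝ) * ⟪mulVecE A (deriv q t), deriv q t⟫ + Ut (q t)) 0 t := by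
    intro t
    have h1 : HasDerivAt (deriv q) (deriv (deriv q) t) t := (hq' t).hasDerivAt
    have h2 : HasDerivAt (fun t => mulVecE A (deriv q t)) (mulVecE A (deriv (deriv q) t)) t := by
      simp only [mulVecE_eq]
      exact (Matrix.toEuclideanCLM (𝕜 := ℝ) A).hasFDerivAt.comp_hasDerivAt t h1
    have h3 : HasDerivAt (fun t => Ut (q t)) (inner ℝ (gradient Ut (q t)) (deriv q t)) t := by
      have := (hUt (q t)).hasGradientAt.hasFDerivAt.comp_hasDerivAt t (hq t).hasDerivAt
      exact this
    have h4 := ((h2.inner ℝ h1).const_mul (1 / 2 : ℝ)).add h3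
    have h5 : gradient U (q t) = - deriv (deriv q) t := eq_neg_of_add_eq_zero_right (hEL t)
    refine h4.congr_deriv ?_
    have h6 : mulVecE A (-deriv (deriv q) t) = - mulVecE A (deriv (deriv q) t) := by
      simp [mulVecE_eq]
    rw [hgrad, h5, h6, inner_neg_left, mulVecE_symm A hA (deriv q t),
      real_inner_comm (mulVecE A (deriv (deriv q) t)) (deriv q t)]
    ring
  intro t₁ t₂
  exact is_const_of_deriv_eq_zero (fun t => (key t).differentiableAt) (fun t => (key t).deriv) t₁ t₂
end

section
/- Let n be a natural number, let A be a real n×n matrix, let Q be a real orthogonal n×n matrix and λ : Fin n → ℝ be such that Qᵀ·A·Q is the diagonal matrix with diagonal entries λ₁,…,λₙ, and let Ũ : ℝⁿ → ℝ be differentiable. If q : ℝ → ℝⁿ is a twice differentiable curve satisfying A·q''(t) + ∇Ũ(q(t)) = 0 for all t, then the curve x(t) := Qᵀ·q(t) satisfies, for every index k and every t, λₖ · xₖ''(t) + ∂ₖṼ(x(t)) = 0, where Ṽ(x) = Ũ(Q·x) and ∂ₖṼ denotes the partial derivative of Ṽ in the direction of the k-th standard basis vector. -/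
open Matrix

/-- Partial derivative of `f` at `q` in the direction of the `i`-th
standard basis vector. -/
noncomputable def pd {n : ℕ} (f : EuclideanSpace ℝ (Fin n) → ℝ) (i : Fin n)
    (q : EuclideanSpace ℝ (Fin n)) : ℝ :=
  fderiv ℝ f q (EuclideanSpace.single i 1)

noncomputable def mulVecL {n : ℕ} (A : Matrix (Fin n) (Fin n) ℝ) :
    EuclideanSpace ℝ (Fin n) →L[ℝ] EuclideanSpace ℝ (Fin n) :=
  LinearMap.toContinuousLinearMap
    { toFun := mulVecE A
      map_add' := fun x y => by
        ext i; simp [mulVecE, Matrix.mulVec_add]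
      map_smul' := fun c x => by
        ext i; simp [mulVecE, Matrix.mulVec_smul] }

theorem mulVecL_apply {n : ℕ} (A : Matrix (Fin n) (Fin n) ℝ)
    (v : EuclideanSpace ℝ (Fin n)) : mulVecL A v = mulVecE A v := rfl

theorem mulVecE_mul {n : ℕ} (A B : Matrix (Fin n) (Fin n) ℝ)
    (v : EuclideanSpace ℝ (Fin n)) : mulVecE A (mulVecE B v) = mulVecE (A * B) v := by
  simp [mulVecE, Matrix.mulVec_mulVec]

theorem mulVecE_one {n : ℕ} (v : EuclideanSpace ℝ (Fin n)) :
    mulVecE (1 : Matrix (Fin n) (Fin n) ℝ) v = v := by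
  simp [mulVecE]

theorem inner_mulVecE_single {n : ℕ} (Q : Matrix (Fin n) (Fin n) ℝ)
    (v : EuclideanSpace ℝ (Fin n)) (k : Fin n) :
    inner ℝ v (mulVecE Q (EuclideanSpace.single k 1)) = mulVecE Qᵀ v k := by
  simp [mulVecE, PiLp.inner_apply, Matrix.mulVec, dotProduct, Pi.single_apply]

theorem stmt_6 (n : ℕ) (A Q : Matrix (Fin n) (Fin n) ℝ) (hQ : Qᵀ * Q = 1)
    (lam : Fin n → ℝ) (hdiag : Qᵀ * A * Q = Matrix.diagonal lam)
    (Ut : EuclideanSpace ℝ (Fin n) → ℝ) (hUt : Differentiable ℝ Ut)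
    (q : ℝ → EuclideanSpace ℝ (Fin n))
    (hq : Differentiable ℝ q) (hq' : Differentiable ℝ (deriv q))
    (hEL : ∀ t, mulVecE A (deriv (deriv q) t) + gradient Ut (q t) = 0)
    (k : Fin n) (t : ℝ) :
    lam k * deriv (deriv (fun s => mulVecE Qᵀ (q s) k)) t
      + pd (fun x => Ut (mulVecE Q x)) k (mulVecE Qᵀ (q t)) = 0 := by
  have hQ2 : Q * Qᵀ = 1 := mul_eq_one_comm.mp hQ
  let f : EuclideanSpace ℝ (Fin n) →L[ℝ] ℝ := (EuclideanSpace.proj k).comp (mulVecL Qᵀ)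
  have hf : ∀ v, f v = mulVecE Qᵀ v k := fun v => rfl
  have d1 : deriv (fun s => mulVecE Qᵀ (q s) k) = fun s => f (deriv q s) := by
    funext s
    exact (f.hasFDerivAt.comp_hasDerivAt s (hq s).hasDerivAt).deriv
  have d2 : deriv (fun s => f (deriv q s)) t = f (deriv (deriv q) t) :=
    (f.hasFDerivAt.comp_hasDerivAt t (hq' t).hasDerivAt).deriv
  have hpt : mulVecL Q (mulVecE Qᵀ (q t)) = q t := by
    rw [mulVecL_apply, mulVecE_mul, hQ2, mulVecE_one]
  have d3 : pd (fun x => Ut (mulVecE Q x)) k (mulVecE Qᵀ (q t))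
      = inner ℝ (gradient Ut (q t)) (mulVecE Q (EuclideanSpace.single k 1)) := by
    have h1 : HasFDerivAt Ut (fderiv ℝ Ut (q t)) (mulVecL Q (mulVecE Qᵀ (q t))) := by
      rw [hpt]; exact (hUt _).hasFDerivAt
    have h2 : HasFDerivAt (fun x => Ut (mulVecE Q x)) _ (mulVecE Qᵀ (q t)) :=
      h1.comp (mulVecE Qᵀ (q t)) (mulVecL Q).hasFDerivAt
    rw [pd, h2.fderiv]
    simp [gradient, mulVecL_apply]
  have hg : gradient Ut (q t) = -mulVecE A (deriv (deriv q) t) :=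
    (neg_eq_of_add_eq_zero_right (hEL t)).symm
  have key : mulVecE Qᵀ (mulVecE A (deriv (deriv q) t)) k
      = lam k * mulVecE Qᵀ (deriv (deriv q) t) k := by
    have : Qᵀ * A = Matrix.diagonal lam * Qᵀ := by
      rw [← hdiag, Matrix.mul_assoc _ Q, hQ2, Matrix.mul_one]
    rw [mulVecE_mul, this, ← mulVecE_mul]
    exact Matrix.mulVec_diagonal lam _ k
  rw [d1, d2, d3, hg, inner_neg_left, inner_mulVecE_single, key, hf]
  ring
end

section
/- Let m ≥ 1 be a natural number, let w : Fin m → ℝ, let μ, d ∈ ℝ, and let A be the (m+1)×(m+1) real block matrix with upper-left block d·I_m, upper-right block the column vector μ·w, lower-left block the row vector μ·wᵀ, and lower-right entry d. Then for every z ∈ ℝ, det(A − z·1) = (d − z)^(m−1) · ((d − z)² − μ²·‖w‖²), where ‖w‖² = ∑ᵢ wᵢ². -/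
open Matrix

theorem aux_ne (m : ℕ) (hm : 1 ≤ m) (w : Fin m → ℝ) (μ t : ℝ) (ht : t ≠ 0) :
    (Matrix.fromBlocks (t • (1 : Matrix (Fin m) (Fin m) ℝ)) (Matrix.of fun i _ => μ * w i)
      (Matrix.of fun _ j => μ * w j) (t • (1 : Matrix (Fin 1) (Fin 1) ℝ))).det
      = t ^ (m - 1) * (t ^ 2 - μ ^ 2 * ∑ i, (w i) ^ 2) := by
  letI : Invertible (t • (1 : Matrix (Fin m) (Fin m) ℝ)) :=
    ⟨t⁻¹ • 1, by simp [smul_smul, ht], by simp [smul_smul, ht]⟩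
  have hinv : ⅟(t • (1 : Matrix (Fin m) (Fin m) ℝ)) = t⁻¹ • 1 := rfl
  rw [Matrix.det_fromBlocks₁₁, hinv, Matrix.det_smul, Matrix.det_one, Matrix.det_unique]
  obtain ⟨k, rfl⟩ : ∃ k, m = k + 1 := ⟨m - 1, by omega⟩
  have hs : ∑ i, (μ * w i) * (μ * w i) = μ ^ 2 * ∑ i, (w i) ^ 2 := by
    rw [Finset.mul_sum]
    exact Finset.sum_congr rfl fun i _ => by ring
  have he : ((Matrix.of fun (_ : Fin 1) j => μ * w j) * (t⁻¹ • (1 : Matrix (Fin (k+1)) (Fin (k+1)) ℝ))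
      * (Matrix.of fun i (_ : Fin 1) => μ * w i)) default default
      = t⁻¹ * (μ ^ 2 * ∑ i, (w i) ^ 2) := by
    rw [Matrix.mul_smul, Matrix.mul_one, Matrix.smul_mul, Matrix.smul_apply, Matrix.mul_apply,
      smul_eq_mul, ← hs]
    rfl
  rw [Matrix.sub_apply, he, Matrix.smul_apply, Matrix.one_apply_eq, Fintype.card_fin]
  simp only [smul_eq_mul, Nat.add_sub_cancel, pow_succ]
  field_simp

theorem aux_all (m : ℕ) (hm : 1 ≤ m) (w : Fin m → ℝ) (μ t : ℝ) :
    (Matrix.fromBlocks (t • (1 : Matrix (Fin m) (Fin m) ℝ)) (Matrix.of fun i _ => μ * w i)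
      (Matrix.of fun _ j => μ * w j) (t • (1 : Matrix (Fin 1) (Fin 1) ℝ))).det
      = t ^ (m - 1) * (t ^ 2 - μ ^ 2 * ∑ i, (w i) ^ 2) := by
  refine congrFun (Continuous.ext_on (f := fun t : ℝ =>
    (Matrix.fromBlocks (t • (1 : Matrix (Fin m) (Fin m) ℝ)) (Matrix.of fun i _ => μ * w i)
      (Matrix.of fun _ j => μ * w j) (t • (1 : Matrix (Fin 1) (Fin 1) ℝ))).det)
    (g := fun t : ℝ => t ^ (m - 1) * (t ^ 2 - μ ^ 2 * ∑ i, (w i) ^ 2))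
    (dense_compl_singleton (0 : ℝ)) ?_ ?_ ?_) t
  · refine Continuous.matrix_det (Continuous.matrix_fromBlocks ?_ ?_ ?_ ?_)
    · exact continuous_id.smul continuous_const
    · exact continuous_const
    · exact continuous_const
    · exact continuous_id.smul continuous_const
  · fun_prop
  · intro s hs
    exact aux_ne m hm w μ s hs

theorem stmt_16 (m : ℕ) (hm : 1 ≤ m) (w : Fin m → ℝ) (μ d : ℝ)
    (A : Matrix (Fin m ⊕ Fin 1) (Fin m ⊕ Fin 1) ℝ)
    (hA : A = Matrix.fromBlocks (d • 1) (Matrix.of fun i _ => μ * w i)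
      (Matrix.of fun _ j => μ * w j) (d • 1)) :
    ∀ z : ℝ, (A - z • 1).det
      = (d - z) ^ (m - 1) * ((d - z) ^ 2 - μ ^ 2 * ∑ i, (w i) ^ 2) := by
  intro z
  rw [← aux_all m hm w μ (d - z), hA, ← Matrix.fromBlocks_one, Matrix.fromBlocks_smul]
  congr 1
  ext i j
  rcases i with i | i <;> rcases j with j | j <;> simp [sub_mul]
end

section
/- Let n be a natural number, let A be a real n×n matrix, let fⱼ : ℝ → ℝ (j = 1,…,n) be twice differentiable functions, and let Ũ : ℝⁿ → ℝ be twice continuously differentiable with ∂ᵢŨ(q) = ∑ⱼ Aᵢⱼ · fⱼ'(qⱼ) for all q ∈ ℝⁿ and all i. Then for all indices i ≠ k and all q ∈ ℝⁿ, Aᵢₖ · fₖ''(qₖ) = Aₖᵢ · fᵢ''(qᵢ). -/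
theorem stmt_18 (n : ℕ) (A : Matrix (Fin n) (Fin n) ℝ)
    (f : Fin n → ℝ → ℝ)
    (hf : ∀ j, Differentiable ℝ (f j)) (hf' : ∀ j, Differentiable ℝ (deriv (f j)))
    (Ut : EuclideanSpace ℝ (Fin n) → ℝ) (hUt : ContDiff ℝ 2 Ut)
    (hpd : ∀ (q : EuclideanSpace ℝ (Fin n)) (i : Fin n),
      pd Ut i q = ∑ j, A i j * deriv (f j) (q j)) :
    ∀ (i k : Fin n), i ≠ k → ∀ q : EuclideanSpace ℝ (Fin n),
      A i k * deriv (deriv (f k)) (q k) = A k i * deriv (deriv (f i)) (q i) := by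
  intro i k _ q
  have hsymm : IsSymmSndFDerivAt ℝ Ut q :=
    (hUt.contDiffAt).isSymmSndFDerivAt (by simp)
  have hd : DifferentiableAt ℝ (fderiv ℝ Ut) q :=
    ((hUt.fderiv_right (m := 1) (by norm_num)).differentiable (by norm_num)) q
  have key : ∀ a b : Fin n,
      fderiv ℝ (fderiv ℝ Ut) q (EuclideanSpace.single b 1) (EuclideanSpace.single a 1)
        = A a b * deriv (deriv (f b)) (q b) := by
    intro a b
    have h1 : HasFDerivAt (fun x => fderiv ℝ Ut x (EuclideanSpace.single a 1))
        ((fderiv ℝ (fderiv ℝ Ut) q).flip (EuclideanSpace.single a 1)) q := by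
      have := hd.hasFDerivAt.clm_apply
        (hasFDerivAt_const (EuclideanSpace.single a (1:ℝ)) q)
      simpa using this
    have h2 : HasFDerivAt (fun x : EuclideanSpace ℝ (Fin n) => ∑ j, A a j * deriv (f j) (x j))
        (∑ j, A a j • (deriv (deriv (f j)) (q j) •
          (EuclideanSpace.proj j : EuclideanSpace ℝ (Fin n) →L[ℝ] ℝ))) q := by
      refine HasFDerivAt.fun_sum fun j _ => ?_
      refine HasFDerivAt.const_mul ?_ _
      exact HasDerivAt.comp_hasFDerivAt q (hf' j (q j)).hasDerivAt
        (EuclideanSpace.proj j : EuclideanSpace ℝ (Fin n) →L[ℝ] ℝ).hasFDerivAt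
    have h3 : (fun x => fderiv ℝ Ut x (EuclideanSpace.single a 1))
        = fun x : EuclideanSpace ℝ (Fin n) => ∑ j, A a j * deriv (f j) (x j) := by
      funext x
      exact hpd x a
    rw [h3] at h1
    have h4 := congrArg (fun L => L (EuclideanSpace.single b (1:ℝ))) (h1.unique h2)
    simpa [ContinuousLinearMap.sum_apply, Pi.single_apply] using h4
  rw [← key i k, ← key k i]
  exact hsymm _ _
end

section
/- Let n be a natural number, let A be a real n×n matrix, let fⱼ : ℝ → ℝ (j = 1,…,n) be twice differentiable functions, and let Ũ : ℝⁿ → ℝ be twice continuously differentiable with ∂ᵢŨ(q) = ∑ⱼ Aᵢⱼ · fⱼ'(qⱼ) for all q ∈ ℝⁿ and all i. If for some index k there exists an index i ≠ k with Aᵢₖ ≠ 0, then fₖ'' is constant; equivalently, there exist real constants α and β such that fₖ'(x) = 2αx + β for all x ∈ ℝ. -/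
theorem second_aux (n : ℕ) (A : Matrix (Fin n) (Fin n) ℝ)
    (f : Fin n → ℝ → ℝ)
    (hf' : ∀ j, Differentiable ℝ (deriv (f j)))
    (Ut : EuclideanSpace ℝ (Fin n) → ℝ) (hUt : ContDiff ℝ 2 Ut)
    (hpd : ∀ (q : EuclideanSpace ℝ (Fin n)) (i : Fin n),
      pd Ut i q = ∑ j, A i j * deriv (f j) (q j))
    (i k : Fin n) (q : EuclideanSpace ℝ (Fin n)) :
    fderiv ℝ (fderiv ℝ Ut) q (EuclideanSpace.single k 1) (EuclideanSpace.single i 1)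
      = A i k * deriv (deriv (f k)) (q k) := by
  have hd : Differentiable ℝ (fderiv ℝ Ut) :=
    (hUt.fderiv_right (m := 1) (by norm_num)).differentiable (by norm_num)
  have h1 : HasFDerivAt (fun q => fderiv ℝ Ut q (EuclideanSpace.single i 1))
      ((fderiv ℝ (fderiv ℝ Ut) q).flip (EuclideanSpace.single i 1)) q := by
    have := (hd q).hasFDerivAt.clm_apply (hasFDerivAt_const (EuclideanSpace.single i (1:ℝ)) q)
    refine this.congr_fderiv ?_
    ext v
    simp
  have h2 : HasFDerivAt (fun q : EuclideanSpace ℝ (Fin n) => ∑ j, A i j * deriv (f j) (q j))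
      (∑ j, A i j • (deriv (deriv (f j)) (q j) •
        (EuclideanSpace.proj j : EuclideanSpace ℝ (Fin n) →L[ℝ] ℝ))) q := by
    apply HasFDerivAt.fun_sum
    intro j _
    apply HasFDerivAt.const_mul
    exact HasDerivAt.comp_hasFDerivAt (f := fun q : EuclideanSpace ℝ (Fin n) => q j) q
      (hf' j (q j)).hasDerivAt
      (EuclideanSpace.proj j : EuclideanSpace ℝ (Fin n) →L[ℝ] ℝ).hasFDerivAt
  have h3 : (fun q => fderiv ℝ Ut q (EuclideanSpace.single i 1)) =
      (fun q : EuclideanSpace ℝ (Fin n) => ∑ j, A i j * deriv (f j) (q j)) :=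
    funext fun q => hpd q i
  rw [h3] at h1
  have h4 := congrArg (fun L => L (EuclideanSpace.single k (1:ℝ))) (h1.unique h2)
  simpa [sum_apply, Pi.single_apply] using h4

theorem stmt_19 (n : ℕ) (A : Matrix (Fin n) (Fin n) ℝ)
    (f : Fin n → ℝ → ℝ)
    (hf : ∀ j, Differentiable ℝ (f j)) (hf' : ∀ j, Differentiable ℝ (deriv (f j)))
    (Ut : EuclideanSpace ℝ (Fin n) → ℝ) (hUt : ContDiff ℝ 2 Ut)
    (hpd : ∀ (q : EuclideanSpace ℝ (Fin n)) (i : Fin n),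
      pd Ut i q = ∑ j, A i j * deriv (f j) (q j))
    (k : Fin n) (hk : ∃ i : Fin n, i ≠ k ∧ A i k ≠ 0) :
    ∃ α β : ℝ, ∀ x : ℝ, deriv (f k) x = 2 * α * x + β := by
  obtain ⟨i, hik, hA⟩ := hk
  set c : ℝ := A k i * deriv (deriv (f i)) 0 / A i k with hc
  have key : ∀ x, deriv (deriv (f k)) x = c := by
    intro x
    have hs : IsSymmSndFDerivAt ℝ Ut (EuclideanSpace.single k x) :=
      hUt.contDiffAt.isSymmSndFDerivAt (by simp)
    have h := hs (EuclideanSpace.single k 1) (EuclideanSpace.single i 1)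
    rw [second_aux n A f hf' Ut hUt hpd, second_aux n A f hf' Ut hUt hpd] at h
    simp [hik] at h
    rw [hc, eq_div_iff hA, ← h, mul_comm]
  refine ⟨c / 2, deriv (f k) 0, fun x => ?_⟩
  have hg : ∀ y, HasDerivAt (fun x => deriv (f k) x - c * x) 0 y := by
    intro y
    have := (hf' k y).hasDerivAt.sub ((hasDerivAt_id y).const_mul c)
    rw [key y] at this
    exact this.congr_deriv (by ring)
  have := is_const_of_deriv_eq_zero (fun y => (hg y).differentiableAt) (fun y => (hg y).deriv) x 0
  simp at this
  linarith
end
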